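/- Let C₀ > 0. There exists δ₀ > 0 such that for every δ ∈ (0, δ₀), every k ∈ {1,2}, every z ∈ K, and every (ζ', t̂) ≠ (0,0) with |t̂'| ≤ C₀ t̂_{ξd}: if μ̂_k(z,ζ',t̂) ≥ −δ λ̂⁴, then m̂_k(z,ζ',t̂) ≠ 0, i.e. the quadratic X ↦ (X + i t̂_{ξd})² + m̂_k has two distinct (simple) roots. -/

import Mathlib

/-- `m̂_k(z,ζ',t̂) = (-1)^k i (σ + i t̂_σ)² + r_z(ξ' + i t̂_{ξ'})`, where `r_z` is the
complex-bilinear extension of the quadratic form with coefficient matrix `R`. -/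
noncomputable def mhat {n : ℕ} (R : Fin n → Fin n → ℝ) (k : ℕ)
    (σ : ℝ) (ξ : Fin n → ℝ) (tσ : ℝ) (tξ : Fin n → ℝ) : ℂ :=
  (-1 : ℂ) ^ k * Complex.I * ((σ : ℂ) + Complex.I * (tσ : ℂ)) ^ 2 +
    ∑ j, ∑ l, (R j l : ℂ) * ((ξ j : ℂ) + Complex.I * (tξ j : ℂ)) *
      ((ξ l : ℂ) + Complex.I * (tξ l : ℂ))

/-- `μ̂_k = 4 t̂_{ξd}² Re m̂_k − 4 t̂_{ξd}⁴ + (Im m̂_k)²`. -/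
noncomputable def muhat {n : ℕ} (R : Fin n → Fin n → ℝ) (k : ℕ)
    (σ : ℝ) (ξ : Fin n → ℝ) (tσ : ℝ) (tξ : Fin n → ℝ) (tξd : ℝ) : ℝ :=
  4 * tξd ^ 2 * (mhat R k σ ξ tσ tξ).re - 4 * tξd ^ 4 + (mhat R k σ ξ tσ tξ).im ^ 2

lemma aux_bilin {n : ℕ} (R : Fin n → Fin n → ℝ) (M : ℝ) (hM : ∀ j l, |R j l| ≤ M)
    (x y : Fin n → ℝ) :
    |∑ j, ∑ l, R j l * x j * y l| ≤ M * n * (∑ j, x j ^ 2 + ∑ j, y j ^ 2) := by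
  have h1 : |∑ j, ∑ l, R j l * x j * y l| ≤ ∑ j, ∑ l, M * (x j ^ 2 + y l ^ 2) := by
    refine (Finset.abs_sum_le_sum_abs _ _).trans (Finset.sum_le_sum fun j _ => ?_)
    refine (Finset.abs_sum_le_sum_abs _ _).trans (Finset.sum_le_sum fun l _ => ?_)
    have h2 : |x j * y l| ≤ x j ^ 2 + y l ^ 2 := by
      rw [abs_le]
      constructor <;> nlinarith [sq_nonneg (x j + y l), sq_nonneg (x j - y l), sq_nonneg (x j), sq_nonneg (y l)]
    rw [mul_assoc, abs_mul]
    exact mul_le_mul (hM j l) h2 (abs_nonneg _) ((abs_nonneg _).trans (hM j l))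
  refine h1.trans (le_of_eq ?_)
  simp only [← Finset.mul_sum, Finset.sum_add_distrib, Finset.sum_const, Finset.card_univ,
    Fintype.card_fin, nsmul_eq_mul]
  ring

lemma aux_bilin_scaled {n : ℕ} (R : Fin n → Fin n → ℝ) (M : ℝ) (hM : ∀ j l, |R j l| ≤ M)
    (x y : Fin n → ℝ) (d : ℝ) (hd : 0 < d) :
    d * |∑ j, ∑ l, R j l * x j * y l| ≤ M * n * (∑ j, x j ^ 2 + d ^ 2 * ∑ j, y j ^ 2) := by
  have h := aux_bilin R M hM x (fun j => d * y j)
  have e1 : ∑ j, ∑ l, R j l * x j * (d * y l) = d * ∑ j, ∑ l, R j l * x j * y l := by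
    simp only [Finset.mul_sum]
    exact Finset.sum_congr rfl fun j _ => Finset.sum_congr rfl fun l _ => by ring
  have e2 : ∑ j, (d * y j) ^ 2 = d ^ 2 * ∑ j, y j ^ 2 := by
    simp only [Finset.mul_sum, mul_pow]
  rw [e1, e2, abs_mul, abs_of_pos hd] at h
  exact h

lemma aux_mhat {n : ℕ} (R : Fin n → Fin n → ℝ) (k : ℕ)
    (σ : ℝ) (ξ : Fin n → ℝ) (tσ : ℝ) (tξ : Fin n → ℝ) :
    mhat R k σ ξ tσ tξ =
      ((-(-1) ^ k * (2 * σ * tσ) + ∑ j, ∑ l, R j l * ξ j * ξ l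
        - ∑ j, ∑ l, R j l * tξ j * tξ l : ℝ) : ℂ) +
      (((-1) ^ k * (σ ^ 2 - tσ ^ 2) + ∑ j, ∑ l, R j l * ξ j * tξ l
        + ∑ j, ∑ l, R j l * tξ j * ξ l : ℝ) : ℂ) * Complex.I := by
  have e : ∑ j, ∑ l, (R j l : ℂ) * ((ξ j : ℂ) + Complex.I * (tξ j : ℂ)) *
      ((ξ l : ℂ) + Complex.I * (tξ l : ℂ)) =
      ∑ j, ∑ l, (R j l : ℂ) * ξ j * ξ l - ∑ j, ∑ l, (R j l : ℂ) * tξ j * tξ l +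
      (∑ j, ∑ l, (R j l : ℂ) * ξ j * tξ l + ∑ j, ∑ l, (R j l : ℂ) * tξ j * ξ l) * Complex.I := by
    simp only [Finset.sum_mul, ← Finset.sum_add_distrib, ← Finset.sum_sub_distrib]
    refine Finset.sum_congr rfl fun j _ => Finset.sum_congr rfl fun l _ => ?_
    linear_combination ((R j l : ℂ) * tξ j * tξ l) * Complex.I_sq
  unfold mhat
  rw [e]
  push_cast
  linear_combination ((-1 : ℂ) ^ k * (2 * σ * tσ + Complex.I * tσ ^ 2)) * Complex.I_sq

/-- If `|t̂'| ≤ C₀ t̂_{ξd}` and `μ̂_k ≥ −δ λ̂⁴` with `δ` small, then `m̂_k ≠ 0`, i.e. the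
roots of `X ↦ (X + i t̂_{ξd})² + m̂_k` are simple. -/
theorem stmt12 (n : ℕ) (K : Type*) [MetricSpace K] [CompactSpace K]
    (R : K → Fin n → Fin n → ℝ)
    (hRcont : ∀ j l, Continuous fun z => R z j l)
    (c : ℝ) (hc : 0 < c)
    (hpd : ∀ (z : K) (η : Fin n → ℝ), c * (∑ j, (η j) ^ 2) ≤ ∑ j, ∑ l, R z j l * η j * η l)
    (C₀ : ℝ) (hC₀ : 0 < C₀) :
    ∃ δ₀ > 0, ∀ δ : ℝ, 0 < δ → δ < δ₀ →
      ∀ k : ℕ, k = 1 ∨ k = 2 →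
      ∀ (z : K) (σ : ℝ) (ξ : Fin n → ℝ) (tσ : ℝ) (tξ : Fin n → ℝ) (tξd : ℝ),
        ¬ (σ = 0 ∧ ξ = 0 ∧ tσ = 0 ∧ tξ = 0 ∧ tξd = 0) →
        Real.sqrt (tσ ^ 2 + ∑ j, (tξ j) ^ 2) ≤ C₀ * tξd →
        -δ * (Real.sqrt ((tσ ^ 2 + (∑ j, (tξ j) ^ 2) + tξd ^ 2) +
            (σ ^ 2 + ∑ j, (ξ j) ^ 2))) ^ 4 ≤ muhat (R z) k σ ξ tσ tξ tξd →
        mhat (R z) k σ ξ tσ tξ ≠ 0 := by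
  obtain ⟨M, hM0, hM⟩ : ∃ M : ℝ, 0 ≤ M ∧ ∀ z j l, |R z j l| ≤ M := by
    have hcont : Continuous fun z => ∑ j, ∑ l, |R z j l| := by
      refine continuous_finsetSum _ fun j _ => continuous_finsetSum _ fun l _ => (hRcont j l).abs
    obtain ⟨M, hM⟩ := (isCompact_range hcont).bddAbove
    refine ⟨max M 0, le_max_right _ _, fun z j l => le_trans ?_ (le_max_left _ _)⟩
    refine le_trans ?_ (hM ⟨z, rfl⟩)
    refine le_trans ?_ (Finset.single_le_sum (f := fun j => ∑ l, |R z j l|)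
      (fun j _ => Finset.sum_nonneg fun l _ => abs_nonneg _) (Finset.mem_univ j))
    exact Finset.single_le_sum (f := fun l => |R z j l|) (fun l _ => abs_nonneg _)
      (Finset.mem_univ l)
  obtain ⟨N, hN⟩ : ∃ N : ℝ, N = M * n := ⟨_, rfl⟩
  have hN0 : 0 ≤ N := by rw [hN]; positivity
  obtain ⟨d, hd⟩ : ∃ d : ℝ, d = 4 * (N + 1) / c := ⟨_, rfl⟩
  have hd0 : 0 < d := by rw [hd]; positivity
  have hdc : d * c = 4 * (N + 1) := by rw [hd]; field_simp
  obtain ⟨A, hA⟩ : ∃ A : ℝ, A = (2 / c + 2) * (3 + 2 * N + 2 * N * d) := ⟨_, rfl⟩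
  have hA0 : 0 ≤ A := by rw [hA]; positivity
  obtain ⟨D, hD⟩ : ∃ D : ℝ, D = (A + 1) * C₀ ^ 2 + 1 := ⟨_, rfl⟩
  have hD0 : 0 < D := by rw [hD]; positivity
  refine ⟨4 / D ^ 2, by positivity, ?_⟩
  intro δ hδ hδ' k hk z σ ξ tσ tξ τ hne hT hmu hm
  have hs : ((-1 : ℝ) ^ k) = 1 ∨ ((-1 : ℝ) ^ k) = -1 := by
    rcases hk with rfl | rfl <;> norm_num
  have hre := congrArg Complex.re hm
  have him := congrArg Complex.im hm
  rw [muhat, hm] at hmu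
  rw [aux_mhat] at hre him
  simp only [Complex.add_re, Complex.add_im, Complex.ofReal_re, Complex.ofReal_im,
    Complex.re_ofReal_mul, Complex.im_ofReal_mul, Complex.I_re, Complex.I_im,
    Complex.zero_re, Complex.zero_im, mul_zero, mul_one, add_zero, zero_add] at hre him hmu
  have hp := hpd z ξ
  have b1 := aux_bilin (R z) M (hM z) tξ tξ
  have b2 := aux_bilin_scaled (R z) M (hM z) ξ tξ d hd0
  have b3 := aux_bilin_scaled (fun j l => R z l j) M (fun j l => hM z l j) ξ tξ d hd0
  have e3 : ∑ j, ∑ l, R z l j * ξ j * tξ l = ∑ j, ∑ l, R z j l * tξ j * ξ l := by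
    rw [Finset.sum_comm]
    exact Finset.sum_congr rfl fun j _ => Finset.sum_congr rfl fun l _ => by ring
  rw [e3] at b3
  rw [← hN] at b1 b2 b3
  have ha0 : 0 ≤ ∑ j, ξ j ^ 2 := Finset.sum_nonneg fun j _ => sq_nonneg _
  have ht0 : 0 ≤ ∑ j, tξ j ^ 2 := Finset.sum_nonneg fun j _ => sq_nonneg _
  have hξ0 : ∑ j, ξ j ^ 2 = 0 → ξ = 0 := fun h => by
    rw [Finset.sum_eq_zero_iff_of_nonneg fun j _ => sq_nonneg _] at h
    exact funext fun j => pow_eq_zero_iff (two_ne_zero) |>.1 (h j (Finset.mem_univ j))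
  have htξ0 : ∑ j, tξ j ^ 2 = 0 → tξ = 0 := fun h => by
    rw [Finset.sum_eq_zero_iff_of_nonneg fun j _ => sq_nonneg _] at h
    exact funext fun j => pow_eq_zero_iff (two_ne_zero) |>.1 (h j (Finset.mem_univ j))
  generalize ∑ j, ξ j ^ 2 = a at *
  generalize ∑ j, tξ j ^ 2 = b at *
  generalize ∑ j, ∑ l, R z j l * ξ j * ξ l = rξ at *
  generalize ∑ j, ∑ l, R z j l * tξ j * tξ l = rt at *
  generalize ∑ j, ∑ l, R z j l * ξ j * tξ l = B1 at *
  generalize ∑ j, ∑ l, R z j l * tξ j * ξ l = B2 at *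
  have hT2 : tσ ^ 2 + b ≤ C₀ ^ 2 * τ ^ 2 := by
    rw [← mul_pow, ← Real.sq_sqrt (by positivity : 0 ≤ tσ ^ 2 + b)]
    exact pow_le_pow_left₀ (Real.sqrt_nonneg _) hT 2
  obtain ⟨T, hTdef⟩ : ∃ T : ℝ, T = tσ ^ 2 + b := ⟨_, rfl⟩
  have hbT : b ≤ T := by rw [hTdef]; linarith [sq_nonneg tσ]
  have hsT : tσ ^ 2 ≤ T := by rw [hTdef]; linarith
  have hT0 : 0 ≤ T := ht0.trans hbT
  -- bound on the mixed terms
  have hB : |B1| + |B2| ≤ c / 2 * a + 2 * N * d * b := by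
    have : d * (|B1| + |B2|) ≤ d * (c / 2 * a + 2 * N * d * b) := by
      have h1 : d * (c / 2 * a + 2 * N * d * b) = 2 * (N + 1) * a + 2 * N * d ^ 2 * b := by
        linear_combination (a / 2) * hdc
      rw [h1]
      linarith
    exact le_of_mul_le_mul_left this hd0
  have hσ : σ ^ 2 ≤ tσ ^ 2 + (c / 2 * a + 2 * N * d * b) := by
    have := neg_abs_le B1
    have := neg_abs_le B2
    have := le_abs_self B1
    have := le_abs_self B2
    rcases hs with h | h <;> rw [h] at him <;> linarith
  have hrt := le_abs_self rt
  have hξ : c * a ≤ σ ^ 2 / 2 + 2 * tσ ^ 2 + 2 * N * b := by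
    have w1 : 0 ≤ σ ^ 2 - 4 * (σ * tσ) + 4 * tσ ^ 2 := by
      have := sq_nonneg (σ - 2 * tσ)
      linarith
    have w2 : 0 ≤ σ ^ 2 + 4 * (σ * tσ) + 4 * tσ ^ 2 := by
      have := sq_nonneg (σ + 2 * tσ)
      linarith
    rcases hs with h | h <;> rw [h] at hre <;> linarith
  have hNdb : 2 * N * d * b ≤ 2 * N * d * T := mul_le_mul_of_nonneg_left hbT (by positivity)
  have hNb : 2 * N * b ≤ 2 * N * T := mul_le_mul_of_nonneg_left hbT (by positivity)
  have hsum : c / 2 * a + σ ^ 2 / 2 ≤ (3 + 2 * N + 2 * N * d) * T := by linarith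
  have haσ : a + σ ^ 2 ≤ A * T := by
    have hc2 : 2 / c * (c / 2) = 1 := by field_simp
    have h1 : (2 / c + 2) * (c / 2 * a + σ ^ 2 / 2) ≤ A * T := by
      rw [hA, mul_assoc]
      exact mul_le_mul_of_nonneg_left hsum (by positivity)
    have h2 : (2 / c + 2) * (c / 2 * a + σ ^ 2 / 2)
        = a + σ ^ 2 + (c * a + 1 / c * σ ^ 2) := by field_simp; ring
    have h3 : 0 ≤ c * a + 1 / c * σ ^ 2 := by positivity
    linarith
  have hL : tσ ^ 2 + b + τ ^ 2 + (σ ^ 2 + a) ≤ D * τ ^ 2 := by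
    have := mul_le_mul_of_nonneg_left hT2 (by linarith : 0 ≤ A + 1)
    rw [hD]
    rw [hTdef] at haσ
    linarith
  have hL0 : 0 ≤ tσ ^ 2 + b + τ ^ 2 + (σ ^ 2 + a) := by positivity
  have hL4 : Real.sqrt (tσ ^ 2 + b + τ ^ 2 + (σ ^ 2 + a)) ^ 4 ≤ D ^ 2 * τ ^ 4 := by
    have h4 : Real.sqrt (tσ ^ 2 + b + τ ^ 2 + (σ ^ 2 + a)) ^ 4
        = (tσ ^ 2 + b + τ ^ 2 + (σ ^ 2 + a)) ^ 2 := by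
      rw [show (4 : ℕ) = 2 * 2 from rfl, pow_mul, Real.sq_sqrt hL0]
    rw [h4]
    calc _ ≤ (D * τ ^ 2) ^ 2 := pow_le_pow_left₀ hL0 hL 2
      _ = _ := by ring
  have hδD : δ * D ^ 2 < 4 := by rwa [lt_div_iff₀ (by positivity)] at hδ'
  have h5 : 4 * τ ^ 4 ≤ δ * D ^ 2 * τ ^ 4 := by
    have := mul_le_mul_of_nonneg_left hL4 hδ.le
    linarith
  have hτ4 : 0 ≤ τ ^ 4 := by positivity
  have hτ : τ = 0 := by
    have h6 : 0 ≤ (δ * D ^ 2 - 4) * τ ^ 4 := by linarith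
    have : τ ^ 4 = 0 := by
      by_contra h7
      have h8 : 0 < τ ^ 4 := lt_of_le_of_ne hτ4 (Ne.symm h7)
      have := mul_neg_of_neg_of_pos (by linarith : δ * D ^ 2 - 4 < 0) h8
      linarith
    exact pow_eq_zero_iff (by norm_num) |>.1 this
  subst hτ
  have q1 := sq_nonneg σ
  have q2 := sq_nonneg tσ
  have hL' : tσ ^ 2 + b + (σ ^ 2 + a) ≤ 0 := by simpa using hL
  exact hne ⟨pow_eq_zero_iff two_ne_zero |>.1 (by linarith : σ ^ 2 = 0), hξ0 (by linarith),
    pow_eq_zero_iff two_ne_zero |>.1 (by linarith : tσ ^ 2 = 0), htξ0 (by linarith), rfl⟩
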